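/- arXiv:2003.04746 — 2 statements merged into one kernel-verified Lean document; each statement's English description precedes it below -/
import Mathlib

section
/- Let a > 0. There exist positive constants C₁ and C₂ (depending only on a) such that for every m ≥ a, every continuous g : [0,1] → ℝ, and every u ∈ C⁴([0,1]) satisfying u''''(x) − m·u''(x) = g(x) on (0,1) with u(0) = u(1) = u''(0) = u''(1) = 0, one has sup_{x∈[0,1]} |u(x)| ≤ C₁·sup_{x∈[0,1]} |g(x)| and sup_{x∈[0,1]} |u''(x)| ≤ C₂·sup_{x∈[0,1]} |g(x)|. -/
/-!
The second derivative `v = u''` solves the second-order Dirichlet problem `v'' - m v = g`,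
`v(0) = v(1) = 0`, and `u` solves `u'' = v`, `u(0) = u(1) = 0`. Both estimates then come from the
weak maximum principle `nonpos_of_second_deriv`. With `M = ‖g‖∞`, the constant `M / a` is a barrier
for `±v`: where `v > M / a` one has `v'' = g + m v ≥ -M + a v > 0`. Then, with `K = M / a ≥ ‖v‖∞`,
the parabola `K x (1 - x) / 2` is a barrier for `±u`. So `C₁ = C₂ = 1 / a` work.
-/

open Set MeasureTheory intervalIntegral Real Filter Topology

/-- The `n`-th derivative of `u` on the interval `[0,1]` (one-sided at the endpoints). -/
noncomputable def D (n : ℕ) (u : ℝ → ℝ) : ℝ → ℝ :=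
  iteratedDerivWithin n u (Set.Icc 0 1)

/-- The supremum norm `‖u‖∞ = sup_{x ∈ [0,1]} |u x|`. -/
noncomputable def normInf (u : ℝ → ℝ) : ℝ :=
  ⨆ x : Set.Icc (0:ℝ) 1, |u x|

/-- The hinged boundary conditions `u(0) = u(1) = u''(0) = u''(1) = 0`. -/
def BC (u : ℝ → ℝ) : Prop :=
  u 0 = 0 ∧ u 1 = 0 ∧ D 2 u 0 = 0 ∧ D 2 u 1 = 0

/-- The Kirchhoff nonlocal coefficient `a + b ∫₀¹ (u'(t))² dt`. -/
noncomputable def KCoef (a b : ℝ) (u : ℝ → ℝ) : ℝ :=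
  a + b * ∫ t in (0:ℝ)..1, (D 1 u t) ^ 2

/-- Maximum principle, strict version: a positive interior maximum is impossible where the second
derivative is positive, since the second derivative test would make the point a local minimum too,
hence `f` locally constant. -/
lemma nonpos_of_second_deriv_pos {f f' f'' : ℝ → ℝ} (hc : ContinuousOn f (Icc 0 1))
    (h0 : f 0 ≤ 0) (h1 : f 1 ≤ 0) (hf : ∀ x ∈ Ioo (0:ℝ) 1, HasDerivAt f (f' x) x)
    (hf' : ∀ x ∈ Ioo (0:ℝ) 1, HasDerivAt f' (f'' x) x)
    (hpos : ∀ x ∈ Ioo (0:ℝ) 1, 0 < f x → 0 < f'' x) : ∀ x ∈ Icc (0:ℝ) 1, f x ≤ 0 := by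
  obtain ⟨c, hcI, hmax⟩ := isCompact_Icc.exists_isMaxOn ⟨0, by simp⟩ hc
  intro x hx
  refine (hmax hx).trans ?_
  by_contra! hfc
  have hcO : c ∈ Ioo (0:ℝ) 1 := by
    refine ⟨lt_of_le_of_ne hcI.1 ?_, lt_of_le_of_ne hcI.2 ?_⟩ <;> rintro rfl <;> linarith
  have hnhds : Ioo (0:ℝ) 1 ∈ 𝓝 c := Ioo_mem_nhds hcO.1 hcO.2
  have hlmax : IsLocalMax f c := hmax.isLocalMax (Icc_mem_nhds hcO.1 hcO.2)
  have hd : deriv f =ᶠ[𝓝 c] f' := by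
    filter_upwards [hnhds] with y hy using (hf y hy).deriv
  have hdd : deriv (deriv f) c = f'' c := by rw [hd.deriv_eq, (hf' c hcO).deriv]
  have hlmin : IsLocalMin f c :=
    isLocalMin_of_deriv_deriv_pos (hdd ▸ hpos c hcO hfc) hlmax.deriv_eq_zero
      (hf c hcO).continuousAt
  have hconst : f =ᶠ[𝓝 c] fun _ => f c := by
    filter_upwards [hlmax, hlmin] with y h₁ h₂ using le_antisymm h₁ h₂
  have hz : deriv (deriv f) c = 0 := by
    rw [hconst.deriv.deriv_eq]; simp
  have := hpos c hcO hfc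
  linarith

/-- Weak maximum principle for `f'' ≥ 0` on the set where `f > 0`. -/
lemma nonpos_of_second_deriv {f f' f'' : ℝ → ℝ} (hc : ContinuousOn f (Icc 0 1))
    (h0 : f 0 ≤ 0) (h1 : f 1 ≤ 0) (hf : ∀ x ∈ Ioo (0:ℝ) 1, HasDerivAt f (f' x) x)
    (hf' : ∀ x ∈ Ioo (0:ℝ) 1, HasDerivAt f' (f'' x) x)
    (hpos : ∀ x ∈ Ioo (0:ℝ) 1, 0 < f x → 0 ≤ f'' x) : ∀ x ∈ Icc (0:ℝ) 1, f x ≤ 0 := by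
  intro x hx
  refine le_of_forall_pos_le_add fun ε hε => ?_
  -- The convex perturbation `ε (x² - 1) ≤ 0` makes the inequality strict.
  have := nonpos_of_second_deriv_pos (f := fun x => f x + ε * (x ^ 2 - 1))
    (f' := fun x => f' x + ε * (2 * x)) (f'' := fun x => f'' x + ε * 2)
    (hc.add (by fun_prop)) (by norm_num; linarith) (by norm_num; linarith)
    (fun y hy => (hf y hy).add (by
      simpa using (((hasDerivAt_id y).pow 2).sub_const 1).const_mul ε))
    (fun y hy => (hf' y hy).add (by
      simpa using ((hasDerivAt_id y).const_mul 2).const_mul ε))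
    (fun y hy hy' => by
      have : 0 < f y := by nlinarith [hy.1, hy.2, mul_nonneg hε.le (by nlinarith [hy.1, hy.2] : 0 ≤ 1 - y ^ 2)]
      have := hpos y hy this
      positivity) x hx
  nlinarith [mul_nonneg hε.le (sq_nonneg x)]

lemma abs_le_normInf {g : ℝ → ℝ} (hg : ContinuousOn g (Icc 0 1)) {x : ℝ}
    (hx : x ∈ Icc (0:ℝ) 1) : |g x| ≤ normInf g := by
  have hb : BddAbove (range fun x : Icc (0:ℝ) 1 => |g x|) := by
    have := isCompact_Icc.bddAbove_image hg.abs
    rwa [image_eq_range] at this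
  exact le_ciSup hb ⟨x, hx⟩

lemma normInf_le {g : ℝ → ℝ} {C : ℝ} (h : ∀ x ∈ Icc (0:ℝ) 1, |g x| ≤ C) : normInf g ≤ C :=
  haveI : Nonempty (Icc (0:ℝ) 1) := ⟨⟨0, by simp⟩⟩
  ciSup_le fun x => h x x.2

/-- One-sided bound for `v'' - m v = g` with zero boundary values, the barrier being `M / a`. -/
lemma le_div_of_ode {a m M : ℝ} (ha : 0 < a) (hm : a ≤ m) (hM : 0 ≤ M) {v v' v'' : ℝ → ℝ}
    (hc : ContinuousOn v (Icc 0 1)) (h0 : v 0 = 0) (h1 : v 1 = 0)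
    (hv : ∀ x ∈ Ioo (0:ℝ) 1, HasDerivAt v (v' x) x)
    (hv' : ∀ x ∈ Ioo (0:ℝ) 1, HasDerivAt v' (v'' x) x)
    (hode : ∀ x ∈ Ioo (0:ℝ) 1, -M ≤ v'' x - m * v x) : ∀ x ∈ Icc (0:ℝ) 1, v x ≤ M / a := by
  have hMa : 0 ≤ M / a := by positivity
  intro x hx
  have := nonpos_of_second_deriv (f := fun x => v x - M / a) (hc.sub continuousOn_const)
    (by simp only [h0]; linarith) (by simp only [h1]; linarith)
    (fun y hy => (hv y hy).sub_const _) hv' (fun y hy hy' => by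
      have h2 : M / a < v y := by linarith
      have h3 : M < v y * a := (div_lt_iff₀ ha).1 h2
      have := hode y hy
      nlinarith) x hx
  linarith

/-- One-sided bound for `w'' ≥ -K` with zero boundary values, the barrier being
`K x (1 - x) / 2`. -/
lemma le_of_second_deriv_ge {K : ℝ} (hK : 0 ≤ K) {w w' w'' : ℝ → ℝ}
    (hc : ContinuousOn w (Icc 0 1)) (h0 : w 0 = 0) (h1 : w 1 = 0)
    (hw : ∀ x ∈ Ioo (0:ℝ) 1, HasDerivAt w (w' x) x)
    (hw' : ∀ x ∈ Ioo (0:ℝ) 1, HasDerivAt w' (w'' x) x)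
    (hode : ∀ x ∈ Ioo (0:ℝ) 1, -K ≤ w'' x) : ∀ x ∈ Icc (0:ℝ) 1, w x ≤ K := by
  intro x hx
  have := nonpos_of_second_deriv (f := fun x => w x + K / 2 * (x ^ 2 - x))
    (f' := fun x => w' x + K / 2 * (2 * x - 1)) (f'' := fun x => w'' x + K / 2 * 2)
    (hc.add (by fun_prop)) (by simp [h0]) (by simp [h1])
    (fun y hy => (hw y hy).add (by
      simpa using (((hasDerivAt_id y).pow 2).sub (hasDerivAt_id y)).const_mul (K / 2)))
    (fun y hy => (hw' y hy).add (by
      simpa using (((hasDerivAt_id y).const_mul 2).sub_const 1).const_mul (K / 2)))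
    (fun y hy _ => by linarith [hode y hy]) x hx
  nlinarith [mul_nonneg hK (sq_nonneg x), mul_nonneg hK (sub_nonneg.2 hx.2)]

lemma continuousOn_D {u : ℝ → ℝ} (hu : ContDiffOn ℝ 4 u (Icc 0 1)) {n : ℕ} (hn : n ≤ 4) :
    ContinuousOn (D n u) (Icc 0 1) :=
  hu.continuousOn_iteratedDerivWithin (by exact_mod_cast hn) (uniqueDiffOn_Icc one_pos)

lemma hasDerivAt_D {u : ℝ → ℝ} (hu : ContDiffOn ℝ 4 u (Icc 0 1)) {n : ℕ} (hn : n < 4) {x : ℝ}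
    (hx : x ∈ Ioo (0:ℝ) 1) : HasDerivAt (D n u) (D (n + 1) u x) x := by
  have := ((hu.differentiableOn_iteratedDerivWithin (by exact_mod_cast hn)
    (uniqueDiffOn_Icc one_pos)) x (Ioo_subset_Icc_self hx)).hasDerivWithinAt
  rw [← iteratedDerivWithin_succ] at this
  exact this.hasDerivAt (Icc_mem_nhds hx.1 hx.2)


/-- A priori bounds, uniform in `m ≥ a`: `‖u‖∞ ≤ C₁‖g‖∞` and
`‖u''‖∞ ≤ C₂‖g‖∞` for every solution of `u'''' - m·u'' = g` with hinged boundary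
conditions. -/
theorem stmt5 (a : ℝ) (ha : 0 < a) :
    ∃ C₁ > (0:ℝ), ∃ C₂ > (0:ℝ), ∀ m : ℝ, a ≤ m →
      ∀ g : ℝ → ℝ, ContinuousOn g (Set.Icc 0 1) →
      ∀ u : ℝ → ℝ, ContDiffOn ℝ 4 u (Set.Icc 0 1) →
        (∀ x ∈ Set.Ioo (0:ℝ) 1, D 4 u x - m * D 2 u x = g x) → BC u →
        normInf u ≤ C₁ * normInf g ∧ normInf (D 2 u) ≤ C₂ * normInf g := by
  refine ⟨1 / a, by positivity, 1 / a, by positivity, fun m hm g hg u hu hode hBC => ?_⟩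
  obtain ⟨hu0, hu1, hv0, hv1⟩ := hBC
  have hM : 0 ≤ normInf g :=
    (abs_nonneg _).trans (abs_le_normInf hg (left_mem_Icc.2 zero_le_one))
  have hg' : ∀ x ∈ Ioo (0:ℝ) 1, -normInf g ≤ g x ∧ g x ≤ normInf g := fun x hx =>
    abs_le.1 (abs_le_normInf hg (Ioo_subset_Icc_self hx))
  have hD0 : D 0 u = u := iteratedDerivWithin_zero
  have hv : ∀ x ∈ Icc (0:ℝ) 1, |D 2 u x| ≤ normInf g / a := fun x hx => by
    have hle := le_div_of_ode ha hm hM (continuousOn_D hu (by norm_num)) hv0 hv1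
      (fun y hy => hasDerivAt_D hu (n := 2) (by norm_num) hy)
      (fun y hy => hasDerivAt_D hu (n := 3) (by norm_num) hy)
      (fun y hy => by linarith [hode y hy, hg' y hy]) x hx
    have hge := le_div_of_ode (v := fun y => -D 2 u y) ha hm hM
      (continuousOn_D hu (by norm_num)).neg (by simp [hv0]) (by simp [hv1])
      (fun y hy => (hasDerivAt_D hu (n := 2) (by norm_num) hy).neg)
      (fun y hy => (hasDerivAt_D hu (n := 3) (by norm_num) hy).neg)
      (fun y hy => by have := hode y hy; norm_num; linarith [hg' y hy]) x hx
    exact abs_le.2 ⟨by linarith, hle⟩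
  have hK : 0 ≤ normInf g / a := by positivity
  have hv' : ∀ x ∈ Ioo (0:ℝ) 1, -(normInf g / a) ≤ D 2 u x ∧ D 2 u x ≤ normInf g / a :=
    fun x hx => abs_le.1 (hv x (Ioo_subset_Icc_self hx))
  have hd0 : ∀ x ∈ Ioo (0:ℝ) 1, HasDerivAt u (D 1 u x) x := fun x hx => by
    simpa only [hD0] using hasDerivAt_D hu (n := 0) (by norm_num) hx
  have hd1 : ∀ x ∈ Ioo (0:ℝ) 1, HasDerivAt (D 1 u) (D 2 u x) x := fun x hx =>
    hasDerivAt_D hu (n := 1) (by norm_num) hx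
  rw [one_div_mul_eq_div]
  refine ⟨normInf_le fun x hx => ?_, normInf_le hv⟩
  have hle := le_of_second_deriv_ge hK hu.continuousOn hu0 hu1 hd0 hd1
    (fun y hy => (hv' y hy).1) x hx
  have hge := le_of_second_deriv_ge (w := fun y => -u y) hK hu.continuousOn.neg
    (by simp [hu0]) (by simp [hu1]) (fun y hy => (hd0 y hy).neg) (fun y hy => (hd1 y hy).neg)
    (fun y hy => neg_le_neg (hv' y hy).2) x hx
  exact abs_le.2 ⟨by linarith, hle⟩
end

section
/- Let a > 0 and b ≥ 0 be constants and let f : ℝ → ℝ be continuous with f(0) = 0, f(s) > 0 for all s > 0, and lim_{s→0⁺} f(s)/s = +∞. Then for every λ₀ > 0 there is no sequence (λₙ, uₙ) where each uₙ is a positive solution of u''''(x) − (a + b∫₀¹(u'(t))²dt)·u''(x) = λₙ·f(u(x)) with u(0) = u(1) = u''(0) = u''(1) = 0, such that λₙ → λ₀ and ‖uₙ‖∞ + ‖uₙ'‖∞ + ‖uₙ''‖∞ → 0. -/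
/-!
Test the equation against the first Dirichlet eigenfunction `s(x) = sin (π x)`. Writing
`K = KCoef a b u`, the boundary form
`Φ = (u''' s - u'' s' + u' s'' - u s''') - K (u' s - u s')` satisfies
`Φ' = (u'''' - K u'') s - u (s'''' - K s'') = s (λ f(u) - (π⁴ + K π²) u)` on `(0,1)`,
and the hinged boundary conditions make `Φ` vanish at both endpoints. If `u` is positive and
uniformly small, then `f(u) ≥ M u` with `M` as large as desired, whereas `K ≤ a + b` as soon as
`|u'| ≤ 1`; when `λ` stays away from `0` this forces `Φ' > 0` on `(0,1)`, contradicting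
`Φ 0 = Φ 1` (`no_small_solution`). Using `Φ` avoids integrating by parts.
-/


open Set MeasureTheory intervalIntegral Real Filter Topology

lemma D_zero (u : ℝ → ℝ) : D 0 u = u := by
  simp [D]

lemma D_continuousOn {u : ℝ → ℝ} (hu : ContDiffOn ℝ 4 u (Set.Icc 0 1)) {k : ℕ} (hk : k ≤ 4) :
    ContinuousOn (D k u) (Set.Icc 0 1) :=
  hu.continuousOn_iteratedDerivWithin (by exact_mod_cast hk) (uniqueDiffOn_Icc zero_lt_one)

lemma D_hasDerivAt {u : ℝ → ℝ} (hu : ContDiffOn ℝ 4 u (Set.Icc 0 1)) {k : ℕ} (hk : k < 4)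
    {x : ℝ} (hx : x ∈ Set.Ioo (0:ℝ) 1) : HasDerivAt (D k u) (D (k + 1) u x) x := by
  have h := (hu.differentiableOn_iteratedDerivWithin (m := k) (by exact_mod_cast hk)
    (uniqueDiffOn_Icc zero_lt_one)) x (Ioo_subset_Icc_self hx)
  have h2 := h.hasDerivWithinAt.hasDerivAt (Icc_mem_nhds hx.1 hx.2)
  simpa only [D, iteratedDerivWithin_succ] using h2

lemma normInf_nonneg (u : ℝ → ℝ) : 0 ≤ normInf u :=
  Real.iSup_nonneg fun _ => abs_nonneg _

/-- Continuity makes the supremum in `normInf` a genuine (bounded) one. -/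
lemma abs_le_normInf_s12 {u : ℝ → ℝ} (hu : ContinuousOn u (Set.Icc 0 1)) {x : ℝ}
    (hx : x ∈ Set.Icc (0:ℝ) 1) : |u x| ≤ normInf u := by
  have hb : BddAbove (Set.range fun y : Set.Icc (0:ℝ) 1 => |u y|) := by
    have h := (isCompact_Icc.image_of_continuousOn hu.abs).bddAbove
    rwa [Set.image_eq_range] at h
  exact le_ciSup hb ⟨x, hx⟩

lemma KCoef_le {a b : ℝ} (hb : 0 ≤ b) {u : ℝ → ℝ}
    (hu : ∀ x ∈ Set.Icc (0:ℝ) 1, |D 1 u x| ≤ 1) : KCoef a b u ≤ a + b := by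
  have h : ‖∫ t in (0:ℝ)..1, (D 1 u t) ^ 2‖ ≤ 1 * |(1:ℝ) - 0| := by
    refine intervalIntegral.norm_integral_le_of_norm_le_const fun x hx => ?_
    rw [Set.uIoc_of_le zero_le_one] at hx
    rw [norm_pow, Real.norm_eq_abs]
    exact pow_le_one₀ (abs_nonneg _) (hu x ⟨hx.1.le, hx.2⟩)
  have h1 : ∫ t in (0:ℝ)..1, (D 1 u t) ^ 2 ≤ 1 := by
    rw [sub_zero, abs_one, mul_one] at h
    exact (le_abs_self _).trans h
  unfold KCoef
  nlinarith

/-- A solution of `u'''' - K u'' = g` with hinged ends cannot satisfy `g > (π⁴ + K π²) u`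
throughout `(0,1)`, because `π⁴ + K π²` is the eigenvalue of `sin (π x)`. -/
lemma no_small_solution {u g : ℝ → ℝ} {K : ℝ} (hu : ContDiffOn ℝ 4 u (Set.Icc 0 1))
    (heq : ∀ x ∈ Set.Ioo (0:ℝ) 1, D 4 u x - K * D 2 u x = g x) (hbc : BC u)
    (hg : ∀ x ∈ Set.Ioo (0:ℝ) 1, (π ^ 4 + K * π ^ 2) * u x < g x) : False := by
  obtain ⟨h0, h1, h20, h21⟩ := hbc
  let Φ : ℝ → ℝ := fun x =>
    (D 3 u x * sin (π * x) - D 2 u x * (π * cos (π * x))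
      - D 1 u x * (π ^ 2 * sin (π * x)) + D 0 u x * (π ^ 3 * cos (π * x)))
    - K * (D 1 u x * sin (π * x) - D 0 u x * (π * cos (π * x)))
  have hc : ContinuousOn Φ (Set.Icc 0 1) := by
    have c0 := D_continuousOn hu (k := 0) (by norm_num)
    have c1 := D_continuousOn hu (k := 1) (by norm_num)
    have c2 := D_continuousOn hu (k := 2) (by norm_num)
    have c3 := D_continuousOn hu (k := 3) (by norm_num)
    fun_prop
  have hd : ∀ x ∈ Set.Ioo (0:ℝ) 1,
      HasDerivAt Φ (sin (π * x) * (g x - (π ^ 4 + K * π ^ 2) * u x)) x := by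
    intro x hx
    have d0 := D_hasDerivAt hu (k := 0) (by norm_num) hx
    have d1 := D_hasDerivAt hu (k := 1) (by norm_num) hx
    have d2 := D_hasDerivAt hu (k := 2) (by norm_num) hx
    have d3 := D_hasDerivAt hu (k := 3) (by norm_num) hx
    have dl : HasDerivAt (fun x : ℝ => π * x) π x := by
      simpa using (hasDerivAt_id x).const_mul π
    have ds := dl.sin
    have dc := dl.cos
    have h := ((((d3.mul ds).sub (d2.mul (dc.const_mul π))).sub
      (d1.mul (ds.const_mul (π ^ 2)))).add (d0.mul (dc.const_mul (π ^ 3)))).sub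
      (((d1.mul ds).sub (d0.mul (dc.const_mul π))).const_mul K)
    refine h.congr_deriv ?_
    rw [← heq x hx]
    simp only [D_zero, zero_add, Nat.reduceAdd]
    ring
  have hmono : StrictMonoOn Φ (Set.Icc 0 1) := by
    refine strictMonoOn_of_deriv_pos (convex_Icc 0 1) hc fun x hx => ?_
    rw [interior_Icc] at hx
    rw [(hd x hx).deriv]
    refine mul_pos (sin_pos_of_pos_of_lt_pi (mul_pos pi_pos hx.1) ?_) (sub_pos.2 (hg x hx))
    nlinarith [pi_pos, hx.2]
  have hlt := hmono (by simp : (0:ℝ) ∈ Set.Icc (0:ℝ) 1) (by simp : (1:ℝ) ∈ Set.Icc (0:ℝ) 1)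
    zero_lt_one
  simp [Φ, D_zero, h0, h1, h20, h21] at hlt

/-- Under condition (H1), positive solutions cannot bifurcate from the
trivial line at any `λ₀ > 0`: there is no sequence `(λₙ, uₙ)` of positive solutions with
`λₙ → λ₀` and `‖uₙ‖∞ + ‖uₙ'‖∞ + ‖uₙ''‖∞ → 0`. -/
theorem stmt12 (a b : ℝ) (ha : 0 < a) (hb : 0 ≤ b)
    (f : ℝ → ℝ) (hf : Continuous f) (hf0 : f 0 = 0) (hfp : ∀ s : ℝ, 0 < s → 0 < f s)
    (hf0' : Tendsto (fun s => f s / s) (𝓝[>] (0:ℝ)) atTop)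
    (lam0 : ℝ) (hlam0 : 0 < lam0) :
    ¬ ∃ (lam : ℕ → ℝ) (u : ℕ → ℝ → ℝ),
      (∀ n : ℕ, ContDiffOn ℝ 4 (u n) (Set.Icc 0 1) ∧
        (∀ x ∈ Set.Ioo (0:ℝ) 1,
          D 4 (u n) x - KCoef a b (u n) * D 2 (u n) x = lam n * f (u n x)) ∧
        BC (u n) ∧ (∀ x ∈ Set.Ioo (0:ℝ) 1, 0 < u n x)) ∧
      Tendsto lam atTop (𝓝 lam0) ∧
      Tendsto (fun n => normInf (u n) + normInf (D 1 (u n)) + normInf (D 2 (u n)))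
        atTop (𝓝 0) := by
  rintro ⟨lam, u, hu, hlam, hnorm⟩
  -- `M` is chosen so that `(lam0 / 2) * M` exceeds the eigenvalue bound `π⁴ + (a + b) π²`.
  set C : ℝ := π ^ 4 + (a + b) * π ^ 2 with hC
  set M : ℝ := 2 * C / lam0 + 1 with hM
  obtain ⟨δ, hδ, hδM⟩ := mem_nhdsGT_iff_exists_Ioo_subset.1 (hf0'.eventually_ge_atTop M)
  have hδ' : (0:ℝ) < δ := hδ
  have e1 : ∀ᶠ n in atTop, lam0 / 2 < lam n :=
    hlam.eventually (lt_mem_nhds (half_lt_self hlam0))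
  have e2 := hnorm.eventually (gt_mem_nhds (lt_min hδ' zero_lt_one))
  obtain ⟨n, hn1, hn2⟩ := (e1.and e2).exists
  obtain ⟨hcd, heq, hbc, hpos⟩ := hu n
  have p0 := normInf_nonneg (u n)
  have p1 := normInf_nonneg (D 1 (u n))
  have p2 := normInf_nonneg (D 2 (u n))
  have hn3 := lt_min_iff.1 hn2
  have hK : KCoef a b (u n) ≤ a + b := by
    refine KCoef_le hb fun x hx => ?_
    have := abs_le_normInf_s12 (D_continuousOn hcd (k := 1) (by norm_num)) hx
    linarith [hn3.2]
  refine no_small_solution hcd heq hbc fun x hx => ?_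
  have hux := hpos x hx
  have hule : u n x < δ := by
    have h1 := abs_le_normInf_s12 hcd.continuousOn (Ioo_subset_Icc_self hx)
    linarith [hn3.1, le_abs_self (u n x)]
  have hfM : M ≤ f (u n x) / u n x := hδM ⟨hux, hule⟩
  rw [le_div_iff₀ hux] at hfM
  have hCM : C < lam0 / 2 * M := by
    have : lam0 / 2 * M = C + lam0 / 2 := by rw [hM]; field_simp
    linarith
  calc (π ^ 4 + KCoef a b (u n) * π ^ 2) * u n x ≤ C * u n x := by rw [hC]; gcongr
    _ < lam0 / 2 * M * u n x := by gcongr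
    _ = lam0 / 2 * (M * u n x) := by ring
    _ ≤ lam0 / 2 * f (u n x) := by gcongr
    _ < lam n * f (u n x) := mul_lt_mul_of_pos_right hn1 (hfp _ hux)
end
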